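/- Let u : ℤ² → [0,∞) be finitely supported with |supp u| = 5. Then the infimum inf{‖∇v‖₂ : v : ℤ² → [0,∞) equimeasurable with u} is attained, and every minimizer u′ has the property that there is a graph automorphism σ of ℤ² mapping supp u′ onto either V◇₁ = {(0,0), (1,0), (−1,0), (0,1), (0,−1)} or Ω = {(0,0), (0,1), (1,0), (0,−1), (1,1)}. -/

import Mathlib

open Filter Topology

noncomputable section

abbrev ZLat (d : ℕ) := Fin d → ℤ

def stdVec (d : ℕ) (i : Fin d) : Fin d → ℝ := fun j => if j = i then 1 else 0

/-- The set of directions E⃗ ⊆ ℝ^d. -/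
def Evec (d : ℕ) : Set (Fin d → ℝ) :=
  {e | (∃ i, e = stdVec d i) ∨
    (∃ i j : Fin d, i < j ∧ e = fun k => (stdVec d i k + stdVec d j k) / 2) ∨
    (∃ i j : Fin d, i < j ∧ e = fun k => (stdVec d i k - stdVec d j k) / 2)}

/-- A fixed enumeration of E⃗ (for d = 2 it is e₁, e₂, (e₁+e₂)/2, (e₁-e₂)/2). -/
def EvecList (d : ℕ) : List (Fin d → ℝ) :=
  ((List.finRange d).map (stdVec d)) ++
  ((List.finRange d).flatMap fun i => (List.finRange d).filterMap fun j =>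
    if i < j then some (fun k => (stdVec d i k + stdVec d j k) / 2) else none) ++
  ((List.finRange d).flatMap fun i => (List.finRange d).filterMap fun j =>
    if i < j then some (fun k => (stdVec d i k - stdVec d j k) / 2) else none)

/-- The n-th largest value of `u`, counted with multiplicity (1-indexed). -/
def nthLargest {α : Type*} (u : α → NNReal) (n : ℕ) : NNReal :=
  sSup {t | ∃ Ω : Finset α, Ω.card = n ∧ ∀ x ∈ Ω, t ≤ u x}

/-- The 1-indexed position of the point with doubled coordinate `m` in the
spiral order 0, 1, −1, 2, −2, … (for even m) resp. 1/2, −1/2, 3/2, −3/2, … (for odd m). -/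
def posIdx (m : ℤ) : ℕ := (if 0 < m then m else 1 - m).toNat

/-- `x` and `y` lie on a common line with direction `e`. -/
def sameLine {d : ℕ} (e : Fin d → ℝ) (x y : ZLat d) : Prop :=
  ∃ c : ℝ, (fun i => (x i : ℝ) - (y i : ℝ)) = c • e

/-- Twice the inner product ⟨e, x⟩, as an integer. -/
def pairing {d : ℕ} (e : Fin d → ℝ) (x : ZLat d) : ℤ :=
  ⌊2 * ∑ i, e i * (x i : ℝ)⌋

/-- One-step rearrangement `R_e`. -/
def stepR {d : ℕ} (e : Fin d → ℝ) (u : ZLat d → NNReal) : ZLat d → NNReal :=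
  fun x => nthLargest (fun y : {y : ZLat d // sameLine e x y} => u y.1) (posIdx (pairing e x))

/-- `R^k u` : k successive one-step rearrangements cycling through the fixed enumeration. -/
def iterR (d : ℕ) (u : ZLat d → NNReal) : ℕ → ZLat d → NNReal
  | 0 => u
  | k + 1 => stepR ((EvecList d).getD (k % (EvecList d).length) 0) (iterR d u k)

/-- The Schwarz rearrangement on ℤ^d : pointwise limit of `R^k u`. -/
def RZd (d : ℕ) (u : ZLat d → NNReal) : ZLat d → NNReal :=
  fun x => limUnder atTop fun k => iterR d u k x

def Admissible {α : Type*} (u : α → NNReal) : Prop :=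
  ∀ t : NNReal, 0 < t → {x | t < u x}.Finite

def Equimeasurable {α : Type*} (u v : α → NNReal) : Prop :=
  ∀ t : NNReal, 0 < t → Nonempty ({x | t < u x} ≃ {x | t < v x})

/-- Graph distance (ℓ¹ distance) on the lattice ℤ^d. -/
def latDist {d : ℕ} (x y : ZLat d) : ℕ := ∑ i, (x i - y i).natAbs

/-- The i-th standard basis vector of ℤ^d. -/
def latE {d : ℕ} (i : Fin d) : ZLat d := fun j => if j = i then 1 else 0

/-- ‖∇u‖_p^p : the p-Sobolev energy, summing over each edge {x, x+e_i} once. -/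
def gradEnergy (d : ℕ) (p : ℝ) (u : ZLat d → NNReal) : ENNReal :=
  ∑' (x : ZLat d) (i : Fin d), ENNReal.ofReal (|(u (x + latE i) : ℝ) - (u x : ℝ)| ^ p)

/-- ‖∇u‖_p. -/
def gradNorm (d : ℕ) (p : ℝ) (u : ZLat d → NNReal) : ENNReal :=
  gradEnergy d p u ^ (1 / p)

/-- Graph automorphism of the lattice graph ℤ^d. -/
def IsLatAuto {d : ℕ} (σ : ZLat d ≃ ZLat d) : Prop :=
  ∀ x y : ZLat d, latDist (σ x) (σ y) = 1 ↔ latDist x y = 1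

def Supermodular (G : NNReal → NNReal → NNReal) : Prop :=
  ∀ s t s₀ t₀ : NNReal, G (s + s₀) t + G s (t + t₀) ≤ G (s + s₀) (t + t₀) + G s t

def StrictlySupermodular (G : NNReal → NNReal → NNReal) : Prop :=
  ∀ s t s₀ t₀ : NNReal, 0 < s₀ → 0 < t₀ →
    G (s + s₀) t + G s (t + t₀) < G (s + s₀) (t + t₀) + G s t

/-- The values of `u` are strictly decreasing: a₁ > a₂ > a₃ > ⋯ . -/
def StrictRan {α : Type*} (u : α → NNReal) : Prop :=
  ∀ n : ℕ, 0 < n → nthLargest u (n + 1) < nthLargest u n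


def Vdia1 : Set (ZLat 2) := {![0,0], ![1,0], ![-1,0], ![0,1], ![0,-1]}

def Omega5 : Set (ZLat 2) := {![0,0], ![0,1], ![1,0], ![0,-1], ![1,1]}

/-!
Placing a value `a i` at the point `φ i` of ℤ^d for every label `i` gives energy `2d ∑ (a i)²` minus
the quadratic form in `a` of the graph recording which of the points `φ i` are neighbours.
Minimizing the energy therefore maximizes a strictly monotone function of this contact graph over
the finitely many graphs on the labels, so a minimum exists and the contact graph of a minimizer
cannot be enlarged by moving the points. In ℤ² contact graphs are bipartite and contain no
`K_{2,3}`, so on five labels each of them lies in a star `K_{1,4}`, realised by V◇₁, or in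
`K_{2,3}` minus an edge, realised by Ω; by maximality it contains one of these two graphs, and any
realisation of it is the image of V◇₁, respectively Ω, under a lattice automorphism.
-/

section Equimeasurable

variable {α ι : Type*} {u v : α → NNReal} {c : NNReal}

theorem setOf_lt_subset_support (u : α → NNReal) (t : NNReal) :
    {x | t < u x} ⊆ Function.support u :=
  fun _ hx => (bot_le.trans_lt hx).ne'

theorem Equimeasurable.finite_support (h : Equimeasurable u v)
    (hu : (Function.support u).Finite) : (Function.support v).Finite := by
  by_contra hv
  obtain ⟨F, hFv, hFcard⟩ :=
    Set.Infinite.exists_subset_card_eq hv ((Function.support u).ncard + 1)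
  have below : ∀ᶠ t in 𝓝[>] (0 : NNReal), ∀ x ∈ F, t < v x :=
    (Filter.eventually_all_finset F).2 fun x hx =>
      (eventually_lt_nhds (pos_iff_ne_zero.2 (hFv hx))).filter_mono nhdsWithin_le_nhds
  obtain ⟨t, htF, ht⟩ := (below.and self_mem_nhdsWithin).exists
  have hcard : F.card ≤ (Function.support u).ncard := by
    have := Set.encard_le_encard (s := (F : Set α)) (t := {x | t < v x}) htF
    rw [← Set.encard_congr (h t ht).some] at this
    have := this.trans (Set.encard_le_encard (setOf_lt_subset_support u t))
    rwa [Set.encard_coe_eq_coe_finsetCard, ← hu.cast_ncard_eq, Nat.cast_le] at this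
  omega

theorem eventually_forall_lt_iff_le (hu : (Function.support u).Finite) (c : NNReal) :
    ∀ᶠ t in 𝓝[<] c, ∀ x, t < u x ↔ c ≤ u x := by
  have gap : ∀ᶠ t in 𝓝[<] c, ∀ x ∈ Function.support u, u x < c → u x < t :=
    (Filter.eventually_all_finite hu).2 fun x _ => Filter.eventually_imp_distrib_left.2 fun hx =>
      (eventually_gt_nhds hx).filter_mono nhdsWithin_le_nhds
  filter_upwards [gap, self_mem_nhdsWithin] with t hgap htc x
  refine ⟨fun htx => ?_, htc.trans_le⟩
  by_contra! hxc
  exact (hgap x (setOf_lt_subset_support u t htx) hxc).not_gt htx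

theorem eventually_ncard_fiber_eq (hu : (Function.support u).Finite) (c : NNReal) :
    ∀ᶠ t in 𝓝[<] c, {x | u x = c}.ncard = {x | t < u x}.ncard - {x | c < u x}.ncard := by
  filter_upwards [eventually_forall_lt_iff_le hu c] with t ht
  have hsub : {x | c < u x} ⊆ {x | t < u x} := fun x hx => (ht x).2 (le_of_lt hx)
  rw [← Set.ncard_sdiff hsub (hu.subset (setOf_lt_subset_support u c))]
  congr 1
  ext x
  simp only [Set.mem_ofPred_eq, Set.mem_sdiff, ht, not_lt]
  exact ⟨fun h => ⟨h.ge, h.le⟩, fun h => le_antisymm h.2 h.1⟩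

theorem Equimeasurable.ncard_fiber_eq (h : Equimeasurable u v)
    (hu : (Function.support u).Finite) (hc : 0 < c) :
    {x | u x = c}.ncard = {x | v x = c}.ncard := by
  have hcard : ∀ t, 0 < t → {x | t < u x}.ncard = {x | t < v x}.ncard :=
    fun t ht => Nat.card_congr (h t ht).some
  have pos : ∀ᶠ t in 𝓝[<] c, 0 < t := (eventually_gt_nhds hc).filter_mono nhdsWithin_le_nhds
  have : (𝓝[<] c).NeBot := nhdsLT_neBot_of_exists_lt ⟨0, hc⟩
  obtain ⟨t, htu, htv, ht⟩ := ((eventually_ncard_fiber_eq hu c).and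
    ((eventually_ncard_fiber_eq (h.finite_support hu) c).and pos)).exists
  rw [htu, htv, hcard t ht, hcard c hc]

theorem Equimeasurable.exists_equiv_support (h : Equimeasurable u v)
    (hu : (Function.support u).Finite) :
    ∃ e : Function.support u ≃ Function.support v, ∀ x, v (e x) = u x := by
  have hv := h.finite_support hu
  have fiber : ∀ c, Nonempty
      ({x : Function.support u // u x = c} ≃ {x : Function.support v // v x = c}) := by
    intro c
    rcases eq_or_ne c 0 with rfl | hc
    · have : IsEmpty {x : Function.support u // u x = 0} := ⟨fun x => x.1.2 x.2⟩
      have : IsEmpty {x : Function.support v // v x = 0} := ⟨fun x => x.1.2 x.2⟩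
      exact ⟨Equiv.equivOfIsEmpty _ _⟩
    have mem_support : ∀ {w : α → NNReal} {x}, w x = c → x ∈ Function.support w :=
      fun hx => hx.trans_ne hc
    have : Finite {x | u x = c} := (hu.subset fun _ => mem_support).to_subtype
    have : Finite {x | v x = c} := (hv.subset fun _ => mem_support).to_subtype
    exact ⟨(Equiv.subtypeSubtypeEquivSubtype mem_support).trans
      ((Finite.card_eq.1 (h.ncard_fiber_eq hu (pos_iff_ne_zero.2 hc))).some.trans
        (Equiv.subtypeSubtypeEquivSubtype mem_support).symm)⟩
  exact ⟨Equiv.ofFiberEquiv fun c => (fiber c).some,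
    Equiv.ofFiberEquiv_map (g := fun x : Function.support v => v x) _⟩

variable {a : ι → NNReal}

theorem support_extend_zero (ha : ∀ i, a i ≠ 0) (φ : ι ↪ α) :
    Function.support (Function.extend φ a 0) = Set.range φ := by
  ext x
  by_cases hx : x ∈ Set.range φ
  · obtain ⟨i, rfl⟩ := hx
    simp [φ.injective.extend_apply, ha i]
  · simp [Function.extend_apply' _ _ _ hx, hx]

theorem setOf_lt_extend_zero (a : ι → NNReal) (φ : ι ↪ α) (t : NNReal) :
    {x | t < Function.extend φ a 0 x} = φ '' {i | t < a i} := by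
  ext x
  by_cases hx : x ∈ Set.range φ
  · obtain ⟨i, rfl⟩ := hx
    simp [φ.injective.extend_apply]
  · have : x ∉ φ '' {i | t < a i} := fun h => hx (Set.image_subset_range _ _ h)
    simp [Function.extend_apply' _ _ _ hx, this]

theorem equimeasurable_extend_extend (a : ι → NNReal) (φ ψ : ι ↪ α) :
    Equimeasurable (Function.extend φ a 0) (Function.extend ψ a 0) := by
  intro t _
  rw [setOf_lt_extend_zero, setOf_lt_extend_zero]
  exact ⟨(Equiv.Set.image φ _ φ.injective).symm.trans (Equiv.Set.image ψ _ ψ.injective)⟩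

theorem equimeasurable_extend_iff [Finite ι] (ha : ∀ i, a i ≠ 0) (φ : ι ↪ α) :
    Equimeasurable (Function.extend φ a 0) v ↔ ∃ ψ : ι ↪ α, Function.extend ψ a 0 = v := by
  constructor
  · intro h
    have hsupp := support_extend_zero ha φ
    obtain ⟨e, he⟩ := h.exists_equiv_support (hsupp ▸ Set.finite_range φ)
    let f : ι ≃ Function.support v :=
      ((Equiv.ofInjective φ φ.injective).trans (Equiv.setCongr hsupp.symm)).trans e
    have hf : ∀ i, v (f i) = a i := fun i => (he _).trans (φ.injective.extend_apply a 0 i)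
    let ψ : ι ↪ α := f.toEmbedding.trans (Function.Embedding.subtype _)
    refine ⟨ψ, funext fun x => ?_⟩
    by_cases hx : x ∈ Set.range ψ
    · obtain ⟨i, rfl⟩ := hx
      exact (ψ.injective.extend_apply a 0 i).trans (hf i).symm
    · rw [Function.extend_apply' _ _ _ hx]
      by_contra hne
      exact hx ⟨f.symm ⟨x, Ne.symm hne⟩, by simp [ψ]⟩
  · rintro ⟨ψ, rfl⟩
    exact equimeasurable_extend_extend a φ ψ

theorem exists_eq_extend_of_finite_support (hu : (Function.support u).Finite) {n : ℕ}
    (hn : (Function.support u).ncard = n) :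
    ∃ a : Fin n → NNReal, (∀ i, a i ≠ 0) ∧ ∃ φ : Fin n ↪ α, u = Function.extend φ a 0 := by
  have : Finite (Function.support u) := hu
  let e : Fin n ≃ Function.support u := (Finite.equivFinOfCardEq hn).symm
  let φ : Fin n ↪ α := e.toEmbedding.trans (Function.Embedding.subtype _)
  refine ⟨u ∘ φ, fun i => (e i).2, φ, funext fun x => ?_⟩
  by_cases hx : x ∈ Set.range φ
  · obtain ⟨i, rfl⟩ := hx
    exact (φ.injective.extend_apply (u ∘ φ) 0 i).symm
  · rw [Function.extend_apply' _ _ _ hx]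
    by_contra hne
    exact hx ⟨e.symm ⟨x, hne⟩, by simp [φ]⟩

end Equimeasurable

section LatticeGraph

variable {d : ℕ}

/-- The lattice graph ℤ^d, whose automorphisms are the maps satisfying `IsLatAuto`. -/
def latGraph (d : ℕ) : SimpleGraph (ZLat d) where
  Adj x y := latDist x y = 1
  symm := ⟨fun x y h => (Finset.sum_congr rfl fun i _ => by omega).trans h⟩
  loopless := ⟨fun x h => by simp [latDist] at h⟩

theorem isLatAuto_of_iso (σ : latGraph d ≃g latGraph d) : IsLatAuto σ.toEquiv :=
  fun _ _ => σ.map_adj_iff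

theorem latE_injective : Function.Injective (latE : Fin d → ZLat d) :=
  fun k l h => by simpa [latE] using congrFun h k

theorem latE_add_latE_ne_zero (k l : Fin d) : latE k + latE l ≠ 0 := by
  intro h
  have hk : (1 : ℤ) + (if k = l then 1 else 0) = 0 := by simpa [latE] using congrFun h k
  split_ifs at hk <;> omega

theorem latGraph_adj_iff {x y : ZLat d} :
    (latGraph d).Adj x y ↔ ∃ k, y = x + latE k ∨ x = y + latE k := by
  constructor
  · intro (h : ∑ i, (x i - y i).natAbs = 1)
    obtain ⟨k, -, hk⟩ := Finset.exists_ne_zero_of_sum_ne_zero (h.trans_ne one_ne_zero)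
    rw [← Finset.add_sum_erase _ _ (Finset.mem_univ k)] at h
    have hrest : ∑ i ∈ Finset.univ.erase k, (x i - y i).natAbs = 0 := by omega
    have heq : ∀ i, i ≠ k → x i = y i := fun i hi => by
      have := Finset.sum_eq_zero_iff.1 hrest i (Finset.mem_erase.2 ⟨hi, Finset.mem_univ i⟩)
      omega
    have hk : y k = x k + 1 ∨ x k = y k + 1 := by omega
    refine ⟨k, hk.imp (fun hk => funext fun i => ?_) fun hk => funext fun i => ?_⟩ <;>
      rcases eq_or_ne i k with rfl | hi <;> simp [latE, *]
  · rintro ⟨k, rfl | rfl⟩ <;> simp [latGraph, latDist, latE, apply_ite Int.natAbs]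

theorem ite_latGraph_adj (x y : ZLat d) (r : ℝ) [Decidable ((latGraph d).Adj x y)] :
    (if (latGraph d).Adj x y then r else 0) =
      ∑ k, ((if y = x + latE k then r else 0) + if x = y + latE k then r else 0) := by
  split_ifs with h
  · obtain ⟨k, rfl | rfl⟩ := latGraph_adj_iff.1 h <;>
      simp [add_assoc, latE_injective.eq_iff, latE_add_latE_ne_zero]
  · rw [latGraph_adj_iff] at h
    push Not at h
    exact (Finset.sum_eq_zero fun k _ => by simp [h k]).symm

end LatticeGraph

section Energy

variable {d : ℕ} {ι : Type*}

/-- The contact graph of an arrangement `φ` of labelled points of ℤ^d: two labels are joined when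
their points are neighbours in the lattice. -/
def contactGraph (φ : ι ↪ ZLat d) : SimpleGraph ι := (latGraph d).comap φ

variable [Fintype ι]

open Classical in
/-- The quadratic form `⟨a, A a⟩` of the adjacency matrix `A` of a graph; every edge contributes
twice. -/
def coupling (a : ι → ℝ) (G : SimpleGraph ι) : ℝ :=
  ∑ p : ι × ι with G.Adj p.1 p.2, a p.1 * a p.2

theorem coupling_strictMono {a : ι → ℝ} (ha : ∀ i, 0 < a i) : StrictMono (coupling a) := by
  classical
  intro G H hGH
  obtain ⟨i, j, hH, hG⟩ : ∃ i j, H.Adj i j ∧ ¬ G.Adj i j := by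
    simpa [SimpleGraph.le_iff_adj] using hGH.not_ge
  exact Finset.sum_lt_sum_of_subset (i := (i, j))
    (Finset.monotone_filter_right _ fun p _ hp => hGH.le hp) (by simpa) (by simpa)
    (mul_pos (ha i) (ha j)) fun p _ _ => (mul_pos (ha p.1) (ha p.2)).le

theorem coupling_contactGraph (a : ι → ℝ) (φ : ι ↪ ZLat d) :
    coupling a (contactGraph φ) =
      2 * ∑ k, ∑ p : ι × ι with φ p.2 = φ p.1 + latE k, a p.1 * a p.2 := by
  classical
  have swap : ∀ k, ∑ p : ι × ι, (if φ p.1 = φ p.2 + latE k then a p.1 * a p.2 else 0) =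
      ∑ p : ι × ι, if φ p.2 = φ p.1 + latE k then a p.1 * a p.2 else 0 := fun k =>
    Fintype.sum_equiv (Equiv.prodComm ι ι) _ _ fun p => by simp [mul_comm]
  calc coupling a (contactGraph φ)
      = ∑ p : ι × ι, if (latGraph d).Adj (φ p.1) (φ p.2) then a p.1 * a p.2 else 0 := by
        simp only [coupling, Finset.sum_filter]
        rfl
    _ = ∑ k, ((∑ p : ι × ι, if φ p.2 = φ p.1 + latE k then a p.1 * a p.2 else 0) +
          ∑ p : ι × ι, if φ p.1 = φ p.2 + latE k then a p.1 * a p.2 else 0) := by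
        simp only [ite_latGraph_adj, ← Finset.sum_add_distrib]
        exact Finset.sum_comm
    _ = _ := by
        simp only [swap, ← two_mul, Finset.mul_sum, Finset.sum_filter]

theorem hasSum_sq_sub_shift {A : Type*} [AddGroup A] {f : A → ℝ} {e : A} {s t : ℝ}
    (hs : HasSum (fun x => f x ^ 2) s) (ht : HasSum (fun x => f x * f (x + e)) t) :
    HasSum (fun x => (f (x + e) - f x) ^ 2) (2 * s - 2 * t) := by
  have hshift : HasSum (fun x => f (x + e) ^ 2) s :=
    (Equiv.hasSum_iff (f := fun x => f x ^ 2) (Equiv.addRight e)).2 hs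
  have expand : (fun x => (f (x + e) - f x) ^ 2) =
      fun x => f (x + e) ^ 2 + f x ^ 2 - 2 * (f x * f (x + e)) := funext fun x => by ring
  rw [expand, two_mul s]
  exact (hshift.add hs).sub (ht.mul_left 2)

theorem hasSum_extend_mul {α : Type*} (a : ι → ℝ) (φ : ι ↪ α) (g : α → ℝ) :
    HasSum (fun x => Function.extend φ a 0 x * g x) (∑ i, a i * g (φ i)) := by
  refine (φ.injective.hasSum_iff fun x hx => ?_).1 ?_
  · simp [Function.extend_apply' _ _ _ hx]
  · simpa only [Function.comp_def, φ.injective.extend_apply] using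
      hasSum_fintype fun i => a i * g (φ i)

theorem extend_zero_apply_eq_sum {α : Type*} [DecidableEq α] (a : ι → ℝ) (φ : ι ↪ α) (x : α) :
    Function.extend φ a 0 x = ∑ j, if φ j = x then a j else 0 := by
  by_cases hx : x ∈ Set.range φ
  · obtain ⟨i, rfl⟩ := hx
    classical simp [φ.injective.extend_apply]
  · rw [Function.extend_apply' _ _ _ hx]
    exact (Finset.sum_eq_zero fun j _ => if_neg fun hj => hx ⟨j, hj⟩).symm

theorem hasSum_sq_sub_shift_extend {A : Type*} [AddGroup A] [DecidableEq A] (a : ι → ℝ) (φ : ι ↪ A)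
    (e : A) :
    HasSum (fun x => (Function.extend φ a 0 (x + e) - Function.extend φ a 0 x) ^ 2)
      (2 * ∑ i, a i ^ 2 - 2 * ∑ p : ι × ι with φ p.2 = φ p.1 + e, a p.1 * a p.2) := by
  have square : HasSum (fun x => Function.extend φ a 0 x ^ 2) (∑ i, a i ^ 2) := by
    simpa only [sq, φ.injective.extend_apply] using
      hasSum_extend_mul a φ (Function.extend φ a 0)
  have product : HasSum (fun x => Function.extend φ a 0 x * Function.extend φ a 0 (x + e))
      (∑ p : ι × ι with φ p.2 = φ p.1 + e, a p.1 * a p.2) := by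
    simp only [Finset.sum_filter, Fintype.sum_prod_type]
    simpa only [extend_zero_apply_eq_sum a φ (φ _ + e), Finset.mul_sum, mul_ite, mul_zero] using
      hasSum_extend_mul a φ fun x => Function.extend φ a 0 (x + e)
  exact hasSum_sq_sub_shift square product

theorem hasSum_sq_gradient_extend (a : ι → ℝ) (φ : ι ↪ ZLat d) :
    HasSum (fun x => ∑ k : Fin d, (Function.extend φ a 0 (x + latE k) -
        Function.extend φ a 0 x) ^ 2)
      (2 * d * ∑ i, a i ^ 2 - coupling a (contactGraph φ)) := by
  have h := hasSum_sum (s := Finset.univ) fun (k : Fin d) _ =>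
    hasSum_sq_sub_shift_extend a φ (latE k)
  rw [Finset.sum_sub_distrib, ← Finset.mul_sum, ← Finset.mul_sum, ← coupling_contactGraph,
    Finset.sum_const, Finset.card_univ, Fintype.card_fin, nsmul_eq_mul] at h
  convert h using 1
  ring

theorem gradEnergy_extend (a : ι → NNReal) (φ : ι ↪ ZLat d) :
    gradEnergy d 2 (Function.extend φ a 0) = ENNReal.ofReal
      (2 * d * ∑ i, (a i : ℝ) ^ 2 - coupling (NNReal.toReal ∘ a) (contactGraph φ)) := by
  have h := hasSum_sq_gradient_extend (NNReal.toReal ∘ a) φ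
  have coe_extend : ∀ x, NNReal.toReal (Function.extend φ a 0 x) =
      Function.extend φ (NNReal.toReal ∘ a) 0 x :=
    fun x => Function.apply_extend NNReal.toReal φ 0 x
  simp only [Function.comp_apply] at h
  rw [← h.tsum_eq, ENNReal.ofReal_tsum_of_nonneg (fun x => by positivity) h.summable]
  refine tsum_congr fun x => ?_
  rw [tsum_fintype, ENNReal.ofReal_sum_of_nonneg fun k _ => by positivity]
  simp only [Real.rpow_two, sq_abs, coe_extend]

theorem gradNorm_extend_le_iff (a : ι → NNReal) (φ ψ : ι ↪ ZLat d) :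
    gradNorm d 2 (Function.extend φ a 0) ≤ gradNorm d 2 (Function.extend ψ a 0) ↔
      coupling (NNReal.toReal ∘ a) (contactGraph ψ) ≤
        coupling (NNReal.toReal ∘ a) (contactGraph φ) := by
  have energy_nonneg :
      0 ≤ 2 * d * ∑ i, (a i : ℝ) ^ 2 - coupling (NNReal.toReal ∘ a) (contactGraph ψ) :=
    (hasSum_sq_gradient_extend (NNReal.toReal ∘ a) ψ).nonneg fun x => by positivity
  rw [gradNorm, gradNorm, ENNReal.rpow_le_rpow_iff (by norm_num), gradEnergy_extend,
    gradEnergy_extend, ENNReal.ofReal_le_ofReal_iff energy_nonneg, sub_le_sub_iff_left]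

end Energy

section Minimizers

variable {d : ℕ} {ι : Type*}

/-- An arrangement is saturated when no arrangement of the same labels keeps all of its contacts
and has a further one. -/
def IsSaturated (φ : ι ↪ ZLat d) : Prop :=
  ∀ ψ : ι ↪ ZLat d, contactGraph φ ≤ contactGraph ψ → contactGraph ψ ≤ contactGraph φ

theorem IsSaturated.relabel {φ : ι ↪ ZLat d} (h : IsSaturated φ) {κ : Type*} (e : κ ≃ ι) :
    IsSaturated (e.toEmbedding.trans φ) := by
  intro ψ hψ
  have hφ : contactGraph φ ≤ contactGraph (e.symm.toEmbedding.trans ψ) := fun i j hij =>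
    hψ (by simpa [contactGraph] using hij)
  exact fun i j hij => h _ hφ (by simpa [contactGraph] using hij)

variable [Finite ι]

theorem exists_forall_gradNorm_extend_le (a : ι → NNReal) (φ : ι ↪ ZLat d) :
    ∃ ψ : ι ↪ ZLat d, ∀ χ : ι ↪ ZLat d,
      gradNorm d 2 (Function.extend ψ a 0) ≤ gradNorm d 2 (Function.extend χ a 0) := by
  have := Fintype.ofFinite ι
  obtain ⟨_, ⟨ψ, rfl⟩, hψ⟩ := Set.exists_max_image
    (Set.range (contactGraph : (ι ↪ ZLat d) → SimpleGraph ι)) (coupling (NNReal.toReal ∘ a))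
    (Set.toFinite _) ⟨_, φ, rfl⟩
  exact ⟨ψ, fun χ => (gradNorm_extend_le_iff a ψ χ).2 (hψ _ ⟨χ, rfl⟩)⟩

theorem isSaturated_of_forall_gradNorm_le {a : ι → NNReal} (ha : ∀ i, a i ≠ 0) {φ : ι ↪ ZLat d}
    (h : ∀ ψ : ι ↪ ZLat d,
      gradNorm d 2 (Function.extend φ a 0) ≤ gradNorm d 2 (Function.extend ψ a 0)) :
    IsSaturated φ := by
  have := Fintype.ofFinite ι
  intro ψ hφψ
  by_contra hψφ
  have pos : ∀ i, 0 < (NNReal.toReal ∘ a) i := fun i => NNReal.coe_pos.2 (pos_iff_ne_zero.2 (ha i))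
  have hlt := coupling_strictMono pos (lt_of_le_not_ge hφψ hψφ)
  exact hlt.not_ge ((gradNorm_extend_le_iff a φ ψ).1 (h ψ))

theorem exists_gradNorm_eq_iInf {u : ZLat d → NNReal} (hu : (Function.support u).Finite) :
    ∃ u', Equimeasurable u u' ∧
      gradNorm d 2 u' = ⨅ (v : ZLat d → NNReal) (_ : Equimeasurable u v), gradNorm d 2 v := by
  obtain ⟨n, hn⟩ : ∃ n, (Function.support u).ncard = n := ⟨_, rfl⟩
  obtain ⟨a, ha, φ, rfl⟩ := exists_eq_extend_of_finite_support hu hn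
  obtain ⟨ψ, hψ⟩ := exists_forall_gradNorm_extend_le a φ
  have hequi := equimeasurable_extend_extend a φ ψ
  refine ⟨_, hequi, le_antisymm (le_iInf₂ fun v hv => ?_) (iInf₂_le _ hequi)⟩
  obtain ⟨χ, rfl⟩ := (equimeasurable_extend_iff ha φ).1 hv
  exact hψ χ

end Minimizers

theorem latGraph_isBipartite (d : ℕ) : (latGraph d).IsBipartite := by
  have even_iff : ∀ (z : ZLat d) (k : Fin d),
      Even (∑ i, (z + latE k : ZLat d) i) ↔ ¬ Even (∑ i, z i) := fun z k => by
    simp [latE, Finset.sum_add_distrib]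
  refine ⟨SimpleGraph.Coloring.mk (fun x => if Even (∑ i, x i) then 0 else 1) fun {x y} hxy => ?_⟩
  obtain ⟨k, rfl | rfl⟩ := latGraph_adj_iff.1 hxy <;> simp only [even_iff] <;> split_ifs <;> simp

theorem latGraph_two_adj_iff {x y : ZLat 2} :
    (latGraph 2).Adj x y ↔ (x 0 - y 0).natAbs + (x 1 - y 1).natAbs = 1 := by
  simp [latGraph, latDist, Fin.sum_univ_two]

theorem zero_adj_iff {v : ZLat 2} :
    (latGraph 2).Adj 0 v ↔ v = ![1, 0] ∨ v = ![-1, 0] ∨ v = ![0, 1] ∨ v = ![0, -1] := by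
  simp only [latGraph_two_adj_iff, funext_iff, Fin.forall_fin_two, Pi.zero_apply,
    Matrix.cons_val_zero, Matrix.cons_val_one]
  omega

theorem adj_iff_zero_adj_sub {d : ℕ} {x y : ZLat d} :
    (latGraph d).Adj x y ↔ (latGraph d).Adj 0 (y - x) := by
  simp only [latGraph, latDist, Pi.zero_apply, Pi.sub_apply, zero_sub, neg_sub]

theorem add_eq_add_of_mem_commonNeighbors {x y a b : ZLat 2} (hxy : x ≠ y)
    (ha : a ∈ (latGraph 2).commonNeighbors x y) (hb : b ∈ (latGraph 2).commonNeighbors x y)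
    (hab : a ≠ b) : a + b = x + y := by
  rw [SimpleGraph.mem_commonNeighbors, adj_iff_zero_adj_sub, zero_adj_iff,
    latGraph_two_adj_iff] at ha hb
  obtain ⟨ha, ha'⟩ := ha
  obtain ⟨hb, hb'⟩ := hb
  simp only [funext_iff, Fin.forall_fin_two, ne_eq, Pi.add_apply, Pi.sub_apply,
    Matrix.cons_val_zero, Matrix.cons_val_one] at *
  rcases ha with ha | ha | ha | ha <;> rcases hb with hb | hb | hb | hb <;> omega

theorem eq_of_mem_commonNeighbors {x y a b c : ZLat 2} (hxy : x ≠ y)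
    (ha : a ∈ (latGraph 2).commonNeighbors x y) (hb : b ∈ (latGraph 2).commonNeighbors x y)
    (hc : c ∈ (latGraph 2).commonNeighbors x y) (hab : a ≠ b) (hac : a ≠ c) : b = c := by
  have hb' := add_eq_add_of_mem_commonNeighbors hxy ha hb hab
  have hc' := add_eq_add_of_mem_commonNeighbors hxy ha hc hac
  exact add_left_cancel (hb'.trans hc'.symm)

theorem eq_or_eq_neg_of_zero_adj {a b c : ZLat 2} (ha : (latGraph 2).Adj 0 a)
    (hb : (latGraph 2).Adj 0 b) (hc : (latGraph 2).Adj 0 c) (hab : a ≠ b) (hab' : a ≠ -b) :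
    (c = a ∨ c = -a) ∨ (c = b ∨ c = -b) := by
  rw [zero_adj_iff] at ha hb hc
  rcases ha with rfl | rfl | rfl | rfl <;> rcases hb with rfl | rfl | rfl | rfl <;>
    rcases hc with rfl | rfl | rfl | rfl <;> revert hab hab' <;> decide

theorem exists_iso_apply_eq_sub {d : ℕ} (o : ZLat d) :
    ∃ σ : latGraph d ≃g latGraph d, ∀ x, σ x = x - o :=
  ⟨⟨Equiv.subRight o, by simp [latGraph, latDist]⟩, fun _ => rfl⟩

theorem exists_iso_apply_smul_add_smul {a b : ZLat 2} (ha : (latGraph 2).Adj 0 a)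
    (hb : (latGraph 2).Adj 0 b) (hab : a ≠ b) (hab' : a ≠ -b) :
    ∃ σ : latGraph 2 ≃g latGraph 2, ∀ m n : ℤ, σ (m • a + n • b) = ![m, n] := by
  rw [zero_adj_iff] at ha hb
  have ortho : ∀ x : ZLat 2, (a ⬝ᵥ x) • a + (b ⬝ᵥ x) • b = x := fun x => by
    rcases ha with rfl | rfl | rfl | rfl <;> rcases hb with rfl | rfl | rfl | rfl <;>
      simp_all [dotProduct, funext_iff, Fin.forall_fin_two]
  have coords : ∀ m n : ℤ, a ⬝ᵥ (m • a + n • b) = m ∧ b ⬝ᵥ (m • a + n • b) = n := fun m n => by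
    rcases ha with rfl | rfl | rfl | rfl <;> rcases hb with rfl | rfl | rfl | rfl <;>
      simp_all [dotProduct, funext_iff, Fin.forall_fin_two]
  let e : ZLat 2 ≃ ZLat 2 :=
    { toFun := fun x => ![a ⬝ᵥ x, b ⬝ᵥ x]
      invFun := fun y => y 0 • a + y 1 • b
      left_inv := ortho
      right_inv := fun y => by
        simp only [coords, funext_iff, Fin.forall_fin_two, Matrix.cons_val_zero,
          Matrix.cons_val_one, and_self] }
  refine ⟨⟨e, fun {x y} => ?_⟩, fun m n =>
    congrArg₂ (fun s t => ![s, t]) (coords m n).1 (coords m n).2⟩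
  rw [latGraph_two_adj_iff, latGraph_two_adj_iff]
  rcases ha with rfl | rfl | rfl | rfl <;> rcases hb with rfl | rfl | rfl | rfl <;>
    first | (simp at hab hab'; done) | (simp [e, dotProduct] <;> omega)

/-- The diamond V◇₁ as an arrangement of the labels `0, …, 4`, with label `0` at its centre. -/
def diamondPoint : Fin 5 ↪ ZLat 2 where
  toFun := ![![0, 0], ![1, 0], ![-1, 0], ![0, 1], ![0, -1]]
  inj' := by decide

/-- The set Ω as an arrangement of the labels `0, …, 4`, with `0, 1` on the points of even parity
and `2, 3, 4` on those of odd parity. -/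
def omegaPoint : Fin 5 ↪ ZLat 2 where
  toFun := ![![0, 0], ![1, 1], ![1, 0], ![0, 1], ![0, -1]]
  inj' := by decide

theorem range_fin_five {α : Type*} (f : Fin 5 → α) :
    Set.range f = {f 0, f 1, f 2, f 3, f 4} := by
  ext x
  simp [Fin.exists_fin_succ, eq_comm]

theorem range_diamondPoint : Set.range diamondPoint = Vdia1 :=
  range_fin_five diamondPoint

theorem contactGraph_diamondPoint : contactGraph diamondPoint = SimpleGraph.starGraph 0 := by
  ext i j
  simp only [contactGraph, SimpleGraph.comap_adj, latGraph_two_adj_iff, SimpleGraph.starGraph_adj]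
  revert i j
  decide

theorem contactGraph_omegaPoint_adj {i j : Fin 5} :
    (contactGraph omegaPoint).Adj i j ↔ (i < 2 ↔ 2 ≤ j) ∧ s(i, j) ≠ s(1, 4) := by
  simp only [contactGraph, SimpleGraph.comap_adj, latGraph_two_adj_iff]
  revert i j
  decide

theorem exists_iso_image_range_eq_Vdia1 {φ : Fin 5 ↪ ZLat 2}
    (h : contactGraph diamondPoint ≤ contactGraph φ) :
    ∃ σ : latGraph 2 ≃g latGraph 2, σ '' Set.range φ = Vdia1 := by
  rw [contactGraph_diamondPoint] at h
  obtain ⟨σ, hσ⟩ := exists_iso_apply_eq_sub (φ 0)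
  have hsub : σ '' Set.range φ ⊆ Vdia1 := by
    rintro _ ⟨_, ⟨i, rfl⟩, rfl⟩
    rw [hσ]
    rcases eq_or_ne i 0 with rfl | hi
    · exact Or.inl (by rw [sub_self]; decide)
    · have hadj := h (SimpleGraph.starGraph_center_adj hi.symm)
      exact Or.inr (zero_adj_iff.1 (adj_iff_zero_adj_sub.1 hadj))
  have hcard : Vdia1.ncard = (σ '' Set.range φ).ncard := by
    rw [Set.ncard_image_of_injective _ σ.injective, Set.ncard_range_of_injective φ.injective,
      ← range_diamondPoint, Set.ncard_range_of_injective diamondPoint.injective]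
  exact ⟨σ, Set.eq_of_subset_of_ncard_le hsub hcard.le
    (range_diamondPoint ▸ Set.finite_range _)⟩

theorem exists_iso_image_eq_Omega5 {o x p q r : ZLat 2} (hp : (latGraph 2).Adj o p)
    (hq : (latGraph 2).Adj o q) (hpq : p ≠ q) (hox : o ≠ x) (hx : p + q = o + x)
    (hr : q + r = o + o) : ∃ σ : latGraph 2 ≃g latGraph 2, σ '' {o, x, p, q, r} = Omega5 := by
  obtain ⟨τ, hτ⟩ := exists_iso_apply_eq_sub o
  obtain ⟨ρ, hρ⟩ := exists_iso_apply_smul_add_smul (adj_iff_zero_adj_sub.1 hp)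
    (adj_iff_zero_adj_sub.1 hq) (fun h => hpq (sub_left_injective h))
    (fun h => hox (add_left_cancel (a := o) (by linear_combination hx - h)))
  have frame : ∀ (m n : ℤ) (y : ZLat 2), y - o = m • (p - o) + n • (q - o) →
      (τ.trans ρ) y = ![m, n] := fun m n y hy =>
    (congrArg ρ ((hτ y).trans hy)).trans (hρ m n)
  have ho : (τ.trans ρ) o = ![0, 0] := frame 0 0 o (by module)
  have hx' : (τ.trans ρ) x = ![1, 1] := frame 1 1 x (by linear_combination (exp := 1) -hx)
  have hp' : (τ.trans ρ) p = ![1, 0] := frame 1 0 p (by module)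
  have hq' : (τ.trans ρ) q = ![0, 1] := frame 0 1 q (by module)
  have hr' : (τ.trans ρ) r = ![0, -1] := frame 0 (-1) r (by linear_combination (exp := 1) hr)
  refine ⟨τ.trans ρ, ?_⟩
  simp only [Set.image_insert_eq, Set.image_singleton, ho, hx', hp', hq', hr', Omega5]
  ext y
  simp only [Set.mem_insert_iff, Set.mem_singleton_iff]
  tauto

theorem exists_iso_image_range_eq_Omega5 {φ : Fin 5 ↪ ZLat 2}
    (h : contactGraph omegaPoint ≤ contactGraph φ) :
    ∃ σ : latGraph 2 ≃g latGraph 2, σ '' Set.range φ = Omega5 := by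
  have adj : ∀ {i j : Fin 5}, (i < 2 ↔ 2 ≤ j) ∧ s(i, j) ≠ s(1, 4) →
      (latGraph 2).Adj (φ i) (φ j) := fun hij => h (contactGraph_omegaPoint_adj.2 hij)
  have ne : ∀ {i j : Fin 5}, i ≠ j → φ i ≠ φ j := φ.injective.ne
  have sub_ne : ∀ {i j : Fin 5}, i ≠ j → φ i - φ 0 ≠ φ j - φ 0 := fun hij h =>
    ne hij (sub_left_injective h)
  have h02 : (latGraph 2).Adj (φ 0) (φ 2) := adj (by decide)
  have h03 : (latGraph 2).Adj (φ 0) (φ 3) := adj (by decide)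
  have h04 : (latGraph 2).Adj (φ 0) (φ 4) := adj (by decide)
  have fourth : φ 2 + φ 3 = φ 0 + φ 1 :=
    add_eq_add_of_mem_commonNeighbors (ne (by decide)) ⟨h02, adj (by decide)⟩
      ⟨h03, adj (by decide)⟩ (ne (by decide))
  have not_opposite : φ 2 - φ 0 ≠ -(φ 3 - φ 0) := fun h =>
    ne (i := 0) (j := 1) (by decide) (add_left_cancel (a := φ 0) (by linear_combination fourth - h))
  rw [range_fin_five]
  rcases eq_or_eq_neg_of_zero_adj (adj_iff_zero_adj_sub.1 h02) (adj_iff_zero_adj_sub.1 h03)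
    (adj_iff_zero_adj_sub.1 h04) (sub_ne (by decide)) not_opposite with (h42 | h42) | (h43 | h43)
  · exact absurd h42 (sub_ne (by decide))
  · rw [Set.insert_comm (φ 2)]
    exact exists_iso_image_eq_Omega5 h03 h02 (ne (by decide)) (ne (by decide))
      (by rw [add_comm, fourth]) (by linear_combination h42)
  · exact absurd h43 (sub_ne (by decide))
  · exact exists_iso_image_eq_Omega5 h02 h03 (ne (by decide)) (ne (by decide)) fourth
      (by linear_combination h43)

theorem le_starGraph_of_coloring {V α : Type*} {G : SimpleGraph V} {r : V} (c : G.Coloring α)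
    (hc : ∀ i ≠ r, ∀ j ≠ r, c i = c j) : G ≤ SimpleGraph.starGraph r := by
  intro i j hij
  rw [SimpleGraph.starGraph_adj]
  by_contra! h
  obtain ⟨hi, hj⟩ := h hij.ne
  exact c.valid hij (hc i hi j hj)

theorem le_contactGraph_omegaPoint_of_coloring {α : Type*} {G : SimpleGraph (Fin 5)}
    (c : G.Coloring α) (hc : ∀ i j, (i < 2 ↔ j < 2) → c i = c j) (hG : ¬ G.Adj 1 4) :
    G ≤ contactGraph omegaPoint := by
  intro i j hij
  rw [contactGraph_omegaPoint_adj, ← not_lt]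
  constructor
  · by_contra h
    exact c.valid hij (hc i j (by tauto))
  · intro h
    rw [← SimpleGraph.mem_edgeSet, h] at hij
    exact hG hij

theorem exists_perm_of_two_coloring (c : Fin 5 → Fin 2) : ∃ π : Equiv.Perm (Fin 5),
    (∀ i ≠ 0, ∀ j ≠ 0, c (π i) = c (π j)) ∨ ∀ i j, (i < 2 ↔ j < 2) → c (π i) = c (π j) := by
  revert c
  decide +kernel

theorem exists_perm_apply_one_apply_four {i j : Fin 5} (hi : i < 2) (hj : 2 ≤ j) :
    ∃ τ : Equiv.Perm (Fin 5), τ 1 = i ∧ τ 4 = j ∧ ∀ k, τ k < 2 ↔ k < 2 := by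
  revert i j
  decide +kernel

theorem exists_not_contactGraph_adj (φ : Fin 5 ↪ ZLat 2) :
    ∃ i < 2, ∃ j, 2 ≤ j ∧ ¬ (contactGraph φ).Adj i j := by
  by_contra! h
  have mem : ∀ j, 2 ≤ j → φ j ∈ (latGraph 2).commonNeighbors (φ 0) (φ 1) := fun j hj =>
    ⟨h 0 (by decide) j hj, h 1 (by decide) j hj⟩
  have h34 : φ 3 = φ 4 := eq_of_mem_commonNeighbors (φ.injective.ne (by decide))
    (mem 2 (by decide)) (mem 3 (by decide)) (mem 4 (by decide))
    (φ.injective.ne (by decide)) (φ.injective.ne (by decide))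
  exact absurd (φ.injective h34) (by decide)

theorem exists_perm_contactGraph_le (φ : Fin 5 ↪ ZLat 2) : ∃ π : Equiv.Perm (Fin 5),
    contactGraph (π.toEmbedding.trans φ) ≤ contactGraph diamondPoint ∨
      contactGraph (π.toEmbedding.trans φ) ≤ contactGraph omegaPoint := by
  obtain ⟨c⟩ := latGraph_isBipartite 2
  obtain ⟨π, hπ | hπ⟩ := exists_perm_of_two_coloring (c ∘ φ)
  · refine ⟨π, Or.inl ?_⟩
    rw [contactGraph_diamondPoint]
    exact le_starGraph_of_coloring (c.comp (SimpleGraph.Hom.comap _ _)) hπ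
  · obtain ⟨i, hi, j, hj, hij⟩ := exists_not_contactGraph_adj (π.toEmbedding.trans φ)
    obtain ⟨τ, rfl, rfl, hτ⟩ := exists_perm_apply_one_apply_four hi hj
    exact ⟨τ.trans π, Or.inr (le_contactGraph_omegaPoint_of_coloring
      (c.comp (SimpleGraph.Hom.comap _ _))
      (fun k l hkl => hπ _ _ (by rw [hτ, hτ, hkl])) hij)⟩

theorem IsSaturated.exists_iso_image_range {φ : Fin 5 ↪ ZLat 2} (h : IsSaturated φ) :
    ∃ σ : latGraph 2 ≃g latGraph 2,
      σ '' Set.range φ = Vdia1 ∨ σ '' Set.range φ = Omega5 := by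
  obtain ⟨π, hπ⟩ := exists_perm_contactGraph_le φ
  have hrange : Set.range (π.toEmbedding.trans φ) = Set.range φ := π.surjective.range_comp φ
  rw [← hrange]
  rcases hπ with hπ | hπ
  · exact (exists_iso_image_range_eq_Vdia1 (h.relabel π _ hπ)).imp fun _ => Or.inl
  · exact (exists_iso_image_range_eq_Omega5 (h.relabel π _ hπ)).imp fun _ => Or.inr

/-- For `u` of support size 5, the minimal Sobolev energy among equimeasurable functions
is attained, and the support of every minimizer is mapped by a graph automorphism of ℤ²
onto V◇₁ or onto Ω = {(0,0),(0,1),(1,0),(0,−1),(1,1)}. -/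
theorem stmt1 (u : ZLat 2 → NNReal) (hfin : (Function.support u).Finite)
    (hcard : (Function.support u).ncard = 5) :
    (∃ u' : ZLat 2 → NNReal, Equimeasurable u u' ∧
      gradNorm 2 2 u' = ⨅ (v : ZLat 2 → NNReal) (_ : Equimeasurable u v), gradNorm 2 2 v) ∧
    (∀ u' : ZLat 2 → NNReal, Equimeasurable u u' →
      gradNorm 2 2 u' = (⨅ (v : ZLat 2 → NNReal) (_ : Equimeasurable u v), gradNorm 2 2 v) →
      ∃ σ : ZLat 2 ≃ ZLat 2, IsLatAuto σ ∧
        (σ '' Function.support u' = Vdia1 ∨ σ '' Function.support u' = Omega5)) := by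
  obtain ⟨a, ha, φ, rfl⟩ := exists_eq_extend_of_finite_support hfin hcard
  refine ⟨exists_gradNorm_eq_iInf hfin, fun u' hu' hmin => ?_⟩
  obtain ⟨ψ, rfl⟩ := (equimeasurable_extend_iff ha φ).1 hu'
  have hψ : IsSaturated ψ := isSaturated_of_forall_gradNorm_le ha fun χ =>
    hmin.trans_le (iInf₂_le _ (equimeasurable_extend_extend a φ χ))
  obtain ⟨σ, hσ⟩ := hψ.exists_iso_image_range
  rw [← support_extend_zero ha ψ] at hσ
  exact ⟨σ.toEquiv, isLatAuto_of_iso σ, hσ⟩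

end
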